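/- arXiv:2411.01577 — 3 statements merged into one kernel-verified Lean document; each statement's English description precedes it below -/
import Mathlib

section
/- Let n ≥ 1 and 0 < β < α ≤ n. For a measurable function F : ℝⁿ → [0,∞) and s ∈ (0,n], define M_s F := ( sup_H A_s(H)^{−1} ∫_{ℝⁿ} F(x)^s H(x) dx )^{1/s}, where the supremum is over all s-dimensional weights H on ℝⁿ with A_s(H) > 0. Then M_α F ≤ M_β F for every nonnegative measurable F on ℝⁿ. -/
open MeasureTheory Metric Set
open scoped ENNReal

noncomputable section

/-- The best constant `A_s(H)` in the `s`-dimensional Frostman condition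
`∫_{B(x₀,R)} H ≤ C R^s` (for all `x₀` and all `R ≥ 1`). -/
def Aconst {n : ℕ} (s : ℝ) (H : EuclideanSpace ℝ (Fin n) → ℝ) : ℝ :=
  sInf {C : ℝ | 0 ≤ C ∧ ∀ x₀ : EuclideanSpace ℝ (Fin n), ∀ R : ℝ, 1 ≤ R →
    (∫ x in Metric.ball x₀ R, H x) ≤ C * R ^ s}

/-- `H : ℝⁿ → [0,1]` is an `s`-dimensional weight: it is measurable and satisfies
the Frostman condition with some finite constant. -/
def IsDimWeight {n : ℕ} (s : ℝ) (H : EuclideanSpace ℝ (Fin n) → ℝ) : Prop :=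
  Measurable H ∧ (∀ x, H x ∈ Set.Icc (0 : ℝ) 1) ∧
    ∃ C : ℝ, 0 ≤ C ∧ ∀ x₀ : EuclideanSpace ℝ (Fin n), ∀ R : ℝ, 1 ≤ R →
      (∫ x in Metric.ball x₀ R, H x) ≤ C * R ^ s

/-- The quantity `M_s F = ( sup_H A_s(H)⁻¹ ∫ F^s H dx )^{1/s}`, the supremum being
over all `s`-dimensional weights `H` with `A_s(H) > 0`. -/
def Msup {n : ℕ} (s : ℝ) (F : EuclideanSpace ℝ (Fin n) → ℝ) : ℝ≥0∞ :=
  (⨆ H : {H : EuclideanSpace ℝ (Fin n) → ℝ // IsDimWeight s H ∧ 0 < Aconst s H},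
      (ENNReal.ofReal (Aconst s H.1))⁻¹ *
        ∫⁻ x, ENNReal.ofReal (F x ^ s * H.1 x)) ^ (1 / s)

/-!
Let `H` be an `α`-dimensional weight with constant `A` and suppose that `I = ∫ F ^ α H` is finite
(truncation reduces to this case). Put `θ = β / α`. Since
`F ^ (α - β) H = (F ^ α H) ^ (1 - θ) H ^ θ`, Hölder's inequality on a ball of radius `R ≥ 1` gives
`∫ F ^ (α - β) H ≤ I ^ (1 - θ) (A R ^ α) ^ θ = I ^ (1 - θ) A ^ θ R ^ β`. So `F ^ (α - β) H` is a
multiple of a `β`-dimensional weight, and testing `M_β F` on it yields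
`I ≤ I ^ (1 - θ) A ^ θ (M_β F) ^ β`, that is, `I ≤ A (M_β F) ^ α`.
-/

theorem le_mul_rpow_inv_of_le_rpow_one_sub_mul {a b c : ℝ≥0∞} {θ : ℝ} (hθ : 0 < θ) (ha : a ≠ ⊤)
    (h : a ≤ a ^ (1 - θ) * b ^ θ * c) : a ≤ b * c ^ θ⁻¹ := by
  rcases eq_or_ne a 0 with rfl | ha₀
  · exact zero_le
  have hsplit : a ^ (1 - θ) * a ^ θ = a := by
    rw [← ENNReal.rpow_add _ _ ha₀ ha, sub_add_cancel, ENNReal.rpow_one]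
  have hcancel : a ^ θ ≤ b ^ θ * c := by
    rw [← ENNReal.mul_le_mul_iff_right (ENNReal.rpow_pos (pos_iff_ne_zero.2 ha₀) ha).ne'
      (ENNReal.rpow_ne_top_of_ne_zero ha₀ ha), hsplit, ← mul_assoc]
    exact h
  calc a = (a ^ θ) ^ θ⁻¹ := (ENNReal.rpow_rpow_inv hθ.ne' a).symm
    _ ≤ (b ^ θ * c) ^ θ⁻¹ := by gcongr
    _ = b * c ^ θ⁻¹ := by
      rw [ENNReal.mul_rpow_of_nonneg _ _ (inv_nonneg.2 hθ.le), ENNReal.rpow_rpow_inv hθ.ne']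

theorem rpow_mul_indicator_le {X : Type*} {f h : X → ℝ≥0∞} {E : Set X} {b : ℝ≥0∞} {p : ℝ}
    (hf : ∀ x ∈ E, f x ≤ b) (hh : ∀ x ∈ E, h x ≤ 1) (hp : 0 ≤ p) (x : X) :
    f x ^ p * E.indicator h x ≤ E.indicator (fun _ ↦ b ^ p) x := by
  by_cases hx : x ∈ E
  · simp only [indicator_of_mem hx]
    exact mul_le_of_le_of_le_one (ENNReal.rpow_le_rpow (hf x hx) hp) (hh x hx)
  · simp only [indicator_of_notMem hx, mul_zero, le_refl]

theorem lintegral_le_of_forall_setLIntegral_sublevel_le {X : Type*} [MeasurableSpace X]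
    {μ : Measure X} {f : X → ℝ≥0∞} {g : X → ℝ} {B : ℝ≥0∞}
    (h : ∀ N : ℕ, ∫⁻ x in {x | g x ≤ N}, f x ∂μ ≤ B) : ∫⁻ x, f x ∂μ ≤ B := by
  have hmono : Monotone fun N : ℕ ↦ {x | g x ≤ N} :=
    fun _ _ hab _ (hx : g _ ≤ _) ↦ hx.trans (Nat.cast_le.2 hab)
  have hcover : ⋃ N : ℕ, {x | g x ≤ N} = univ :=
    eq_univ_of_forall fun x ↦ mem_iUnion.2 (exists_nat_ge (g x))
  rw [← setLIntegral_univ, ← hcover, setLIntegral_iUnion_of_directed _ hmono.directed_le]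
  exact iSup_le h

section FrostmanBound

variable {X : Type*} [PseudoMetricSpace X] [MeasurableSpace X] {μ : Measure X}
  {f h : X → ℝ≥0∞} {s θ : ℝ} {C : ℝ≥0∞}

/-- The `s`-dimensional Frostman condition with constant `C` on the density `h` with respect to
`μ`. As in `Aconst`, only radii at least `1` are tested; in contrast to `IsDimWeight`, the density
takes values in `ℝ≥0∞` and need not be bounded. -/
def FrostmanBound (μ : Measure X) (s : ℝ) (h : X → ℝ≥0∞) (C : ℝ≥0∞) : Prop :=
  ∀ x₀ : X, ∀ R : ℝ, 1 ≤ R → ∫⁻ x in ball x₀ R, h x ∂μ ≤ C * ENNReal.ofReal R ^ s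

namespace FrostmanBound

theorem mono (hh : FrostmanBound μ s h C) (hfh : f ≤ h) : FrostmanBound μ s f C :=
  fun x₀ R hR ↦ (lintegral_mono hfh).trans (hh x₀ R hR)

theorem const_mul (hh : FrostmanBound μ s h C) {a : ℝ≥0∞} (ha : a ≠ ⊤) :
    FrostmanBound μ s (fun x ↦ a * h x) (a * C) := fun x₀ R hR ↦ by
  rw [lintegral_const_mul' _ _ ha, mul_assoc]
  gcongr
  exact hh x₀ R hR

theorem lintegral_eq_zero (hh : FrostmanBound μ s h 0) : ∫⁻ x, h x ∂μ = 0 := by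
  rcases isEmpty_or_nonempty X with _ | ⟨⟨x₀⟩⟩
  · exact lintegral_of_isEmpty _ _
  rw [← nonpos_iff_eq_zero]
  refine lintegral_le_of_forall_setLIntegral_sublevel_le (g := (dist · x₀)) fun N ↦ ?_
  have hsub : {x | dist x x₀ ≤ N} ⊆ ball x₀ (N + 1) := fun x hx ↦
    mem_ball.2 (lt_of_le_of_lt hx (lt_add_one _))
  calc ∫⁻ x in {x | dist x x₀ ≤ N}, h x ∂μ
      ≤ ∫⁻ x in ball x₀ (N + 1), h x ∂μ := lintegral_mono_set hsub
    _ ≤ 0 * ENNReal.ofReal (N + 1) ^ s := hh x₀ (N + 1) (by simp)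
    _ = 0 := zero_mul _

theorem rpow_mul_rpow (hh : FrostmanBound μ s h C) (hf : AEMeasurable f μ)
    (hhm : AEMeasurable h μ) (hθ₀ : 0 ≤ θ) (hθ₁ : θ ≤ 1) :
    FrostmanBound μ (s * θ) (fun x ↦ f x ^ (1 - θ) * h x ^ θ)
      ((∫⁻ x, f x ∂μ) ^ (1 - θ) * C ^ θ) := fun x₀ R hR ↦
  have hθ' : 0 ≤ 1 - θ := sub_nonneg.2 hθ₁
  calc ∫⁻ x in ball x₀ R, f x ^ (1 - θ) * h x ^ θ ∂μ
      ≤ (∫⁻ x in ball x₀ R, f x ∂μ) ^ (1 - θ) * (∫⁻ x in ball x₀ R, h x ∂μ) ^ θ :=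
        ENNReal.lintegral_mul_norm_pow_le hf.restrict hhm.restrict hθ' hθ₀ (sub_add_cancel 1 θ)
    _ ≤ (∫⁻ x, f x ∂μ) ^ (1 - θ) * (C * ENNReal.ofReal R ^ s) ^ θ := by
        gcongr
        · exact Measure.restrict_le_self
        · exact hh x₀ R hR
    _ = (∫⁻ x, f x ∂μ) ^ (1 - θ) * C ^ θ * ENNReal.ofReal R ^ (s * θ) := by
        rw [ENNReal.mul_rpow_of_nonneg _ _ hθ₀, ← ENNReal.rpow_mul, mul_assoc]

theorem rpow_sub_mul {α β : ℝ} (hh : FrostmanBound μ α h C) (hf : AEMeasurable f μ)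
    (hhm : AEMeasurable h μ) (hβ : 0 < β) (hβα : β ≤ α) :
    FrostmanBound μ β (fun x ↦ f x ^ (α - β) * h x)
      ((∫⁻ x, f x ^ α * h x ∂μ) ^ (1 - β / α) * C ^ (β / α)) := by
  have hα : 0 < α := hβ.trans_le hβα
  have hθ₀ : 0 ≤ β / α := by positivity
  have hθ₁ : β / α ≤ 1 := (div_le_one hα).2 hβα
  have hexp : α * (1 - β / α) = α - β := by field_simp
  have hfactor (x : X) : (f x ^ α * h x) ^ (1 - β / α) * h x ^ (β / α) = f x ^ (α - β) * h x := by
    rw [ENNReal.mul_rpow_of_nonneg _ _ (sub_nonneg.2 hθ₁), ← ENNReal.rpow_mul, hexp, mul_assoc,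
      ← ENNReal.rpow_add_of_nonneg _ _ (sub_nonneg.2 hθ₁) hθ₀, sub_add_cancel, ENNReal.rpow_one]
  simpa only [Pi.mul_apply, hfactor, mul_div_cancel₀ β hα.ne'] using
    hh.rpow_mul_rpow ((hf.pow_const α).mul hhm) hhm hθ₀ hθ₁

end FrostmanBound

theorem frostmanBound_ofReal_iff {H : X → ℝ} {c : ℝ} (hH : ∀ x, 0 ≤ H x)
    (hint : ∀ x₀ R, IntegrableOn H (ball x₀ R) μ) (hc : 0 ≤ c) :
    FrostmanBound μ s (fun x ↦ ENNReal.ofReal (H x)) (ENNReal.ofReal c) ↔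
      ∀ x₀ : X, ∀ R : ℝ, 1 ≤ R → ∫ x in ball x₀ R, H x ∂μ ≤ c * R ^ s := by
  refine forall₃_congr fun x₀ R hR ↦ ?_
  have hR₀ : 0 < R := one_pos.trans_le hR
  rw [← ofReal_integral_eq_lintegral_ofReal (hint x₀ R) (.of_forall hH),
    ENNReal.ofReal_rpow_of_pos hR₀, ← ENNReal.ofReal_mul hc,
    ENNReal.ofReal_le_ofReal_iff (by positivity)]

theorem integrableOn_ball_of_mem_Icc [ProperSpace X] [IsFiniteMeasureOnCompacts μ] {H : X → ℝ}
    {a b : ℝ} (hHm : AEStronglyMeasurable H μ) (hH : ∀ x, H x ∈ Icc a b) (x₀ : X) (R : ℝ) :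
    IntegrableOn H (ball x₀ R) μ :=
  Measure.integrableOn_of_bounded measure_ball_lt_top.ne hHm
    (.of_forall fun x ↦ abs_le_max_abs_abs (hH x).1 (hH x).2)

end FrostmanBound

section Weights

variable {n : ℕ} {s C : ℝ} {H F : EuclideanSpace ℝ (Fin n) → ℝ}

theorem Aconst_nonneg : 0 ≤ Aconst s H :=
  Real.sInf_nonneg fun _ hC ↦ hC.1

theorem Aconst_le (hC : 0 ≤ C) (h : ∀ x₀ : EuclideanSpace ℝ (Fin n), ∀ R : ℝ, 1 ≤ R →
    ∫ x in ball x₀ R, H x ≤ C * R ^ s) : Aconst s H ≤ C :=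
  csInf_le ⟨0, fun _ hD ↦ hD.1⟩ ⟨hC, h⟩

theorem IsDimWeight.frostmanBound (hH : IsDimWeight s H) :
    FrostmanBound volume s (fun x ↦ ENNReal.ofReal (H x)) (ENNReal.ofReal (Aconst s H)) := by
  obtain ⟨hHm, hH01, C, hC⟩ := hH
  refine (frostmanBound_ofReal_iff (fun x ↦ (hH01 x).1)
    (integrableOn_ball_of_mem_Icc hHm.aestronglyMeasurable hH01) Aconst_nonneg).2 fun x₀ R hR ↦ ?_
  have hRs : 0 < R ^ s := Real.rpow_pos_of_pos (one_pos.trans_le hR) s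
  rw [← div_le_iff₀ hRs]
  exact le_csInf ⟨C, hC⟩ fun D hD ↦ (div_le_iff₀ hRs).2 (hD.2 x₀ R hR)

theorem Msup_rpow (hs : 0 < s) (hF : ∀ x, 0 ≤ F x) :
    Msup s F ^ s =
      ⨆ H : {H : EuclideanSpace ℝ (Fin n) → ℝ // IsDimWeight s H ∧ 0 < Aconst s H},
        (ENNReal.ofReal (Aconst s H.1))⁻¹ *
          ∫⁻ x, ENNReal.ofReal (F x) ^ s * ENNReal.ofReal (H.1 x) := by
  simp only [Msup, one_div, ENNReal.rpow_inv_rpow hs.ne',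
    ENNReal.ofReal_rpow_of_nonneg (hF _) hs.le, ← ENNReal.ofReal_mul (Real.rpow_nonneg (hF _) s)]

theorem IsDimWeight.lintegral_le_Aconst_mul_Msup_rpow (hH : IsDimWeight s H) (hs : 0 < s)
    (hF : ∀ x, 0 ≤ F x) :
    ∫⁻ x, ENNReal.ofReal (F x) ^ s * ENNReal.ofReal (H x) ≤
      ENNReal.ofReal (Aconst s H) * Msup s F ^ s := by
  rcases (Aconst_nonneg (s := s) (H := H)).eq_or_lt with hA | hA
  · have hzero : FrostmanBound volume s (fun x ↦ ENNReal.ofReal (H x)) 0 := by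
      simpa only [hA.symm, ENNReal.ofReal_zero] using hH.frostmanBound
    have hae : (fun x ↦ ENNReal.ofReal (H x)) =ᵐ[volume] 0 :=
      (lintegral_eq_zero_iff hH.1.ennreal_ofReal).1 hzero.lintegral_eq_zero
    refine (lintegral_eq_zero_of_ae_eq_zero ?_).trans_le zero_le
    filter_upwards [hae] with x hx
    simp only [hx, Pi.zero_apply, mul_zero]
  · rw [← ENNReal.inv_mul_le_iff (ENNReal.ofReal_pos.2 hA).ne' ENNReal.ofReal_ne_top,
      Msup_rpow hs hF]
    exact le_iSup_of_le ⟨H, hH, hA⟩ le_rfl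

end Weights

section Duality

variable {n : ℕ} {s : ℝ} {F : EuclideanSpace ℝ (Fin n) → ℝ}
  {h : EuclideanSpace ℝ (Fin n) → ℝ≥0∞} {C K : ℝ≥0∞}

theorem FrostmanBound.lintegral_le_mul_Msup_rpow_of_le_one (hh : FrostmanBound volume s h C)
    (hC : C ≠ ⊤) (hhm : Measurable h) (hh1 : ∀ x, h x ≤ 1) (hs : 0 < s) (hF : ∀ x, 0 ≤ F x) :
    ∫⁻ x, ENNReal.ofReal (F x) ^ s * h x ≤ C * Msup s F ^ s := by
  lift C to NNReal using hC
  lift h to EuclideanSpace ℝ (Fin n) → NNReal using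
    fun x ↦ ne_top_of_le_ne_top ENNReal.one_ne_top (hh1 x)
  have hHm : Measurable fun x ↦ (h x : ℝ) := hhm.ennreal_toReal
  have hH01 (x : EuclideanSpace ℝ (Fin n)) : (h x : ℝ) ∈ Icc (0 : ℝ) 1 :=
    ⟨NNReal.coe_nonneg _, ENNReal.coe_le_one_iff.1 (hh1 x)⟩
  have hball := (frostmanBound_ofReal_iff (s := s) (fun x ↦ (hH01 x).1)
    (integrableOn_ball_of_mem_Icc hHm.aestronglyMeasurable hH01) C.coe_nonneg).1
    (by simpa only [ENNReal.ofReal_coe_nnreal] using hh)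
  have hweight : IsDimWeight s fun x ↦ (h x : ℝ) := ⟨hHm, hH01, C, C.coe_nonneg, hball⟩
  calc ∫⁻ x, ENNReal.ofReal (F x) ^ s * h x
      ≤ ENNReal.ofReal (Aconst s fun x ↦ (h x : ℝ)) * Msup s F ^ s := by
        simpa only [ENNReal.ofReal_coe_nnreal] using
          hweight.lintegral_le_Aconst_mul_Msup_rpow hs hF
    _ ≤ C * Msup s F ^ s := by
        gcongr
        exact ENNReal.ofReal_le_of_le_toReal (Aconst_le C.coe_nonneg hball)

theorem FrostmanBound.lintegral_le_mul_Msup_rpow_of_le_const (hh : FrostmanBound volume s h C)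
    (hC : C ≠ ⊤) (hhm : Measurable h) (hK : K ≠ ⊤) (hhK : ∀ x, h x ≤ K) (hs : 0 < s)
    (hF : ∀ x, 0 ≤ F x) :
    ∫⁻ x, ENNReal.ofReal (F x) ^ s * h x ≤ C * Msup s F ^ s := by
  rcases eq_or_ne K 0 with rfl | hK₀
  · simp [nonpos_iff_eq_zero.1 (hhK _)]
  have hK' : K⁻¹ ≠ ⊤ := ENNReal.inv_ne_top.2 hK₀
  have hle_one (x : EuclideanSpace ℝ (Fin n)) : K⁻¹ * h x ≤ 1 :=
    (ENNReal.inv_mul_le_iff hK₀ hK).2 ((hhK x).trans_eq (mul_one K).symm)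
  have hscaled := (hh.const_mul hK').lintegral_le_mul_Msup_rpow_of_le_one
    (ENNReal.mul_ne_top hK' hC) (hhm.const_mul _) hle_one hs hF
  simp only [mul_left_comm _ K⁻¹] at hscaled
  rwa [lintegral_const_mul' _ _ hK', mul_assoc,
    ENNReal.mul_le_mul_iff_right (ENNReal.inv_ne_zero.2 hK) hK'] at hscaled

end Duality

section Comparison

variable {n : ℕ} {α β : ℝ} {F H : EuclideanSpace ℝ (Fin n) → ℝ}
  {h : EuclideanSpace ℝ (Fin n) → ℝ≥0∞} {A K : ℝ≥0∞}

theorem FrostmanBound.lintegral_le_mul_Msup_rpow_of_le (hh : FrostmanBound volume α h A)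
    (hA : A ≠ ⊤) (hhm : Measurable h) (hβ : 0 < β) (hβα : β ≤ α) (hFm : Measurable F)
    (hF : ∀ x, 0 ≤ F x) (hK : K ≠ ⊤) (hbdd : ∀ x, ENNReal.ofReal (F x) ^ (α - β) * h x ≤ K)
    (hfin : ∫⁻ x, ENNReal.ofReal (F x) ^ α * h x ≠ ⊤) :
    ∫⁻ x, ENNReal.ofReal (F x) ^ α * h x ≤ A * Msup β F ^ α := by
  have hα : 0 < α := hβ.trans_le hβα
  have hθ : 0 < β / α := div_pos hβ hα
  have hθ₁ : 0 ≤ 1 - β / α := sub_nonneg.2 ((div_le_one hα).2 hβα)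
  have hpow (x : EuclideanSpace ℝ (Fin n)) : ENNReal.ofReal (F x) ^ β *
      (ENNReal.ofReal (F x) ^ (α - β) * h x) = ENNReal.ofReal (F x) ^ α * h x := by
    rw [← mul_assoc, ← ENNReal.rpow_add_of_nonneg _ _ hβ.le (sub_nonneg.2 hβα),
      add_sub_cancel]
  have hconst : (∫⁻ x, ENNReal.ofReal (F x) ^ α * h x) ^ (1 - β / α) * A ^ (β / α) ≠ ⊤ :=
    ENNReal.mul_ne_top (ENNReal.rpow_ne_top_of_nonneg hθ₁ hfin)
      (ENNReal.rpow_ne_top_of_nonneg hθ.le hA)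
  have hself : ∫⁻ x, ENNReal.ofReal (F x) ^ α * h x ≤
      (∫⁻ x, ENNReal.ofReal (F x) ^ α * h x) ^ (1 - β / α) * A ^ (β / α) * Msup β F ^ β := by
    simpa only [hpow] using
      (hh.rpow_sub_mul hFm.ennreal_ofReal.aemeasurable hhm.aemeasurable hβ hβα)
        |>.lintegral_le_mul_Msup_rpow_of_le_const hconst
          ((hFm.ennreal_ofReal.pow_const _).mul hhm) hK hbdd hβ hF
  have hexp : β * (β / α)⁻¹ = α := by field_simp
  simpa only [← ENNReal.rpow_mul, hexp] using
    le_mul_rpow_inv_of_le_rpow_one_sub_mul hθ hfin hself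

theorem IsDimWeight.setLIntegral_sublevel_le_Aconst_mul_Msup_rpow (hH : IsDimWeight α H)
    (hβ : 0 < β) (hβα : β ≤ α) (hFm : Measurable F) (hF : ∀ x, 0 ≤ F x) (N : ℕ) :
    ∫⁻ x in {x | max (F x) ‖x‖ ≤ N}, ENNReal.ofReal (F x) ^ α * ENNReal.ofReal (H x) ≤
      ENNReal.ofReal (Aconst α H) * Msup β F ^ α := by
  set E : Set (EuclideanSpace ℝ (Fin n)) := {x | max (F x) ‖x‖ ≤ N}
  have hE : MeasurableSet E := measurableSet_le (hFm.max measurable_norm) measurable_const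
  have hEvol : volume E ≠ ⊤ := measure_ne_top_of_subset
    (fun x hx ↦ mem_closedBall_zero_iff.2 ((le_max_right _ _).trans hx))
    (measure_closedBall_lt_top (x := 0) (r := N)).ne
  have hFE : ∀ x ∈ E, ENNReal.ofReal (F x) ≤ N := fun x hx ↦
    ENNReal.ofReal_le_natCast.2 ((le_max_left _ _).trans hx)
  set h : EuclideanSpace ℝ (Fin n) → ℝ≥0∞ := E.indicator fun x ↦ ENNReal.ofReal (H x)
  have hbdd {p : ℝ} (hp : 0 ≤ p) (x : EuclideanSpace ℝ (Fin n)) :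
      ENNReal.ofReal (F x) ^ p * h x ≤ E.indicator (fun _ ↦ (N : ℝ≥0∞) ^ p) x :=
    rpow_mul_indicator_le hFE (fun x _ ↦ ENNReal.ofReal_le_one.2 (hH.2.1 x).2) hp x
  have hpow_ne_top {p : ℝ} (hp : 0 ≤ p) : (N : ℝ≥0∞) ^ p ≠ ⊤ :=
    ENNReal.rpow_ne_top_of_nonneg hp (ENNReal.natCast_ne_top N)
  have hα : 0 ≤ α := hβ.le.trans hβα
  have hfin : ∫⁻ x, ENNReal.ofReal (F x) ^ α * h x ≠ ⊤ := by
    refine ne_top_of_le_ne_top ?_ (lintegral_mono (hbdd hα))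
    rw [lintegral_indicator_const hE]
    exact ENNReal.mul_ne_top (hpow_ne_top hα) hEvol
  have hle : h ≤ fun x ↦ ENNReal.ofReal (H x) := indicator_le_self _ _
  have hint : ∫⁻ x in E, ENNReal.ofReal (F x) ^ α * ENNReal.ofReal (H x) =
      ∫⁻ x, ENNReal.ofReal (F x) ^ α * h x := by
    simp only [← lintegral_indicator hE, h, indicator_mul_right]
  rw [hint]
  exact (hH.frostmanBound.mono hle).lintegral_le_mul_Msup_rpow_of_le ENNReal.ofReal_ne_top
    (hH.1.ennreal_ofReal.indicator hE) hβ hβα hFm hF (hpow_ne_top (sub_nonneg.2 hβα))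
    (fun x ↦ (hbdd (sub_nonneg.2 hβα) x).trans (indicator_le_self _ _ x)) hfin

theorem IsDimWeight.lintegral_le_Aconst_mul_Msup_rpow_of_le (hH : IsDimWeight α H)
    (hβ : 0 < β) (hβα : β ≤ α) (hFm : Measurable F) (hF : ∀ x, 0 ≤ F x) :
    ∫⁻ x, ENNReal.ofReal (F x) ^ α * ENNReal.ofReal (H x) ≤
      ENNReal.ofReal (Aconst α H) * Msup β F ^ α :=
  lintegral_le_of_forall_setLIntegral_sublevel_le fun N ↦
    hH.setLIntegral_sublevel_le_Aconst_mul_Msup_rpow hβ hβα hFm hF N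

theorem Msup_mono_general (hFm : Measurable F) (hF : ∀ x, 0 ≤ F x) :
    AntitoneOn (fun s ↦ Msup s F) (Ioi 0) := by
  intro β hβ α hα hβα
  rw [← ENNReal.rpow_le_rpow_iff hα, Msup_rpow hα hF]
  refine iSup_le fun ⟨H, hH, hA⟩ ↦ ?_
  rw [ENNReal.inv_mul_le_iff (ENNReal.ofReal_pos.2 hA).ne' ENNReal.ofReal_ne_top]
  exact hH.lintegral_le_Aconst_mul_Msup_rpow_of_le hβ hβα hFm hF

end Comparison

/-- Theorem 4.1 of the paper, due to Shayya: for `0 < β < α ≤ n`,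
`M_α F ≤ M_β F` for every nonnegative measurable `F` on `ℝⁿ`. -/
theorem Msup_mono :
    ∀ n : ℕ, 1 ≤ n →
    ∀ α β : ℝ, 0 < β → β < α → α ≤ n →
    ∀ F : EuclideanSpace ℝ (Fin n) → ℝ, Measurable F → (∀ x, 0 ≤ F x) →
      Msup α F ≤ Msup β F := by
  intro n _ α β hβ hβα _ F hFm hF
  exact Msup_mono_general hFm hF hβ (hβ.trans hβα) hβα.le
end
end

section
/- Let ε₀ > 0, 0 < c ≤ C₁, and let γ : [0, ε₀] → ℝ² be a C² unit-speed curve with c ≤ |γ''(s)| ≤ C₁ for all s ∈ [0, ε₀]. Let ℓ ⊂ ℝ² be a line. Then there is a constant C, depending only on c, C₁, and ε₀, such that for every 0 < δ ≤ 1, the Lebesgue measure of the intersection of the δ-neighborhoods satisfies | { x : dist(x, ℓ) ≤ δ } ∩ { x : dist(x, γ([0, ε₀])) ≤ δ } | ≤ C δ^{3/2}. -/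
open MeasureTheory Metric Set

noncomputable section

abbrev ℝ2 : Type := EuclideanSpace ℝ (Fin 2)

open Module
open scoped NNReal RealInnerProductSpace

/-!
Let `n` be a unit normal of the line through `p`, and consider the height `⟪n, γ - p⟫` of the curve
above it. On a piece of length `1 / (4 C₁)` the direction of `γ'` barely changes. Since `γ''` is
orthogonal to `γ'` in the plane, the height has either slope at least `1 / 2` or second derivative
at least `c / 2` in absolute value throughout the piece. By the mean value theorem, four parameters
of the piece whose pairwise distances exceed a suitable multiple of `√δ` cannot all have height at
most `2δ`. Hence the part of the curve within `2δ` of the line is covered by boundedly many balls of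
radius `O(√δ)`, and each such ball meets the `δ`-strip around the line in area `O(δ · √δ)`.
-/

section Packing

variable {X : Type*} [PseudoEMetricSpace X] {ι : Type*}

theorem packingNumber_le_sum_of_subset_biUnion {ε : ℝ≥0} {A : Set X} (F : Finset ι)
    (B : ι → Set X) (hA : A ⊆ ⋃ i ∈ F, B i) :
    packingNumber ε A ≤ ∑ i ∈ F, packingNumber ε (B i) := by
  refine iSup_le fun P => iSup₂_le fun hPA hP => ?_
  have hP_eq : P = ⋃ i ∈ F, P ∩ B i := by
    rw [← inter_iUnion₂, inter_eq_left.2 (hPA.trans hA)]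
  calc P.encard ≤ ∑ i ∈ F, (P ∩ B i).encard :=
        (congrArg encard hP_eq).le.trans (F.set_encard_biUnion_le _)
    _ ≤ ∑ i ∈ F, packingNumber ε (B i) := Finset.sum_le_sum fun i _ =>
        IsSeparated.encard_le_packingNumber inter_subset_right (hP.subset inter_subset_left)

theorem coveringNumber_image_le_of_lipschitzOnWith {Y : Type*} [PseudoEMetricSpace Y] {f : X → Y}
    {A : Set X} {K : ℝ≥0} (ε : ℝ≥0) (hf : LipschitzOnWith K f A) :
    coveringNumber (K * ε) (f '' A) ≤ coveringNumber ε A := by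
  refine le_iInf₂ fun N hNA => le_iInf fun hN => ?_
  have hcover : IsCover (K * ε) (f '' A) (f '' N) := by
    rintro _ ⟨x, hx, rfl⟩
    obtain ⟨y, hy, hxy⟩ := hN hx
    refine ⟨f y, mem_image_of_mem f hy, (hf hx (hNA hy)).trans ?_⟩
    rw [ENNReal.coe_mul]
    gcongr
    exact hxy
  exact (hcover.coveringNumber_le_encard (image_mono hNA)).trans (encard_image_le f N)

theorem exists_strictMono_of_le_encard {α : Type*} [LinearOrder α] {P : Set α} {k : ℕ}
    (hk : (k : ℕ∞) ≤ P.encard) : ∃ f : Fin k → α, StrictMono f ∧ ∀ i, f i ∈ P := by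
  obtain ⟨Q, hQP, hQ⟩ := exists_subset_encard_eq hk
  have hQ_fin : Q.Finite := finite_of_encard_eq_coe hQ
  have hQ_card : hQ_fin.toFinset.card = k := by
    rwa [hQ_fin.encard_eq_coe_toFinset_card, Nat.cast_inj] at hQ
  exact ⟨hQ_fin.toFinset.orderEmbOfFin hQ_card, OrderEmbedding.strictMono _, fun i =>
    hQP (hQ_fin.mem_toFinset.1 (Finset.orderEmbOfFin_mem _ _ i))⟩

theorem packingNumber_le_of_forall_exists_le_add {r : ℝ≥0} {A : Set ℝ} {k : ℕ}
    (h : ∀ f : Fin (k + 1) → ℝ, (∀ i, f i ∈ A) → ∃ i j, i < j ∧ f j ≤ f i + r) :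
    packingNumber r A ≤ k := by
  refine iSup_le fun P => iSup₂_le fun hPA hP => ?_
  by_contra! hk
  obtain ⟨f, hf, hfP⟩ := exists_strictMono_of_le_encard (k := k + 1)
    (by simpa using Order.add_one_le_of_lt hk)
  obtain ⟨i, j, hij, hle⟩ := h f fun i => hPA (hfP i)
  refine (hP (hfP i) (hfP j) (hf hij).ne).not_ge ?_
  rw [edist_nndist, ENNReal.coe_le_coe, ← NNReal.coe_le_coe, coe_nndist, dist_comm, Real.dist_eq,
    abs_of_pos (sub_pos.2 (hf hij))]
  linarith

end Packing

section Sublevel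

variable {S : Set ℝ} {f f' f'' : ℝ → ℝ} {η : ℝ}

theorem exists_mem_Ioo_hasDerivWithinAt_eq_slope (hS : S.OrdConnected)
    (hf : ∀ t ∈ S, HasDerivWithinAt f (f' t) S t) {x y : ℝ} (hx : x ∈ S) (hy : y ∈ S)
    (hxy : x < y) : ∃ ξ ∈ Ioo x y, f' ξ = (f y - f x) / (y - x) := by
  have hsub : Icc x y ⊆ S := hS.out hx hy
  exact exists_hasDerivAt_eq_slope f f' hxy
    (fun t ht => ((hf t (hsub ht)).mono hsub).continuousWithinAt)
    fun t ht => ((hf t (hsub (Ioo_subset_Icc_self ht))).mono hsub).hasDerivAt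
      (Icc_mem_nhds ht.1 ht.2)

theorem exists_mem_Ioo_mul_abs_hasDerivWithinAt_le {r : ℝ} (hr : 0 ≤ r) (hS : S.OrdConnected)
    (hf : ∀ t ∈ S, HasDerivWithinAt f (f' t) S t) {x y : ℝ} (hx : x ∈ S) (hy : y ∈ S)
    (hxη : |f x| ≤ η) (hyη : |f y| ≤ η) (hxy : x + r < y) :
    ∃ ξ ∈ Ioo x y, r * |f' ξ| ≤ 2 * η := by
  obtain ⟨ξ, hξ, hslope⟩ :=
    exists_mem_Ioo_hasDerivWithinAt_eq_slope hS hf hx hy (by linarith)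
  have hpos : 0 < y - x := by linarith
  refine ⟨ξ, hξ, ?_⟩
  calc r * |f' ξ| ≤ (y - x) * |f' ξ| := by gcongr; linarith
    _ = |f y - f x| := by rw [hslope, abs_div, abs_of_pos hpos, mul_div_cancel₀ _ hpos.ne']
    _ ≤ 2 * η := (abs_sub _ _).trans (by linarith)

theorem packingNumber_sublevel_le_one_of_le_abs_deriv {r : ℝ≥0} {m : ℝ} (hS : S.OrdConnected)
    (hf : ∀ t ∈ S, HasDerivWithinAt f (f' t) S t) (hm : ∀ t ∈ S, m ≤ |f' t|)
    (hr : 2 * η < m * r) : packingNumber r {t ∈ S | |f t| ≤ η} ≤ 1 := by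
  refine packingNumber_le_of_forall_exists_le_add (k := 1) fun x hx => ⟨0, 1, by decide, ?_⟩
  by_contra! hgap
  obtain ⟨ξ, hξ, hle⟩ := exists_mem_Ioo_mul_abs_hasDerivWithinAt_le r.coe_nonneg hS hf
    (hx 0).1 (hx 1).1 (hx 0).2 (hx 1).2 hgap
  have hξS : ξ ∈ S := hS.out (hx 0).1 (hx 1).1 (Ioo_subset_Icc_self hξ)
  nlinarith [mul_le_mul_of_nonneg_left (hm ξ hξS) r.coe_nonneg]

-- Among four `r`-separated points of the sublevel set, `f'` is at most `2η / r` somewhere between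
-- the first two and somewhere between the last two, although it varies by more than `κ r`.
theorem packingNumber_sublevel_le_three_of_le_abs_deriv2 {r : ℝ≥0} {κ : ℝ} (hκ : 0 < κ)
    (hS : S.OrdConnected) (hf : ∀ t ∈ S, HasDerivWithinAt f (f' t) S t)
    (hf' : ∀ t ∈ S, HasDerivWithinAt f' (f'' t) S t) (hm : ∀ t ∈ S, κ ≤ |f'' t|)
    (hr0 : 0 < r) (hr : 4 * η ≤ κ * r ^ 2) : packingNumber r {t ∈ S | |f t| ≤ η} ≤ 3 := by
  refine packingNumber_le_of_forall_exists_le_add (k := 3) fun x hx => ?_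
  by_contra! hgap
  have hbetween : ∀ {i j ξ}, ξ ∈ Ioo (x i) (x j) → ξ ∈ S := fun hξ =>
    hS.out (hx _).1 (hx _).1 (Ioo_subset_Icc_self hξ)
  obtain ⟨ξ, hξ, hξ_le⟩ := exists_mem_Ioo_mul_abs_hasDerivWithinAt_le r.coe_nonneg hS hf
    (hx 0).1 (hx 1).1 (hx 0).2 (hx 1).2 (hgap 0 1 (by decide))
  obtain ⟨ζ, hζ, hζ_le⟩ := exists_mem_Ioo_mul_abs_hasDerivWithinAt_le r.coe_nonneg hS hf
    (hx 2).1 (hx 3).1 (hx 2).2 (hx 3).2 (hgap 2 3 (by decide))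
  have hξζ : r < ζ - ξ := by linarith [hξ.2, hζ.1, hgap 1 2 (by decide)]
  have hpos : 0 < ζ - ξ := r.coe_nonneg.trans_lt hξζ
  obtain ⟨θ, hθ, hslope⟩ := exists_mem_Ioo_hasDerivWithinAt_eq_slope hS hf' (hbetween hξ)
    (hbetween hζ) (sub_pos.1 hpos)
  have hθS : θ ∈ S := hS.out (hbetween hξ) (hbetween hζ) (Ioo_subset_Icc_self hθ)
  have hstrict : κ * r ^ 2 < 4 * η :=
    calc κ * r ^ 2 = r * (κ * r) := by ring
      _ < r * (κ * (ζ - ξ)) := by gcongr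
      _ ≤ r * (|f'' θ| * (ζ - ξ)) := by gcongr; exact hm θ hθS
      _ = r * |f' ζ - f' ξ| := by
        rw [hslope, abs_div, abs_of_pos hpos, div_mul_cancel₀ _ hpos.ne']
      _ ≤ r * (|f' ζ| + |f' ξ|) := by gcongr; exact abs_sub _ _
      _ ≤ 4 * η := by rw [mul_add]; linarith
  exact hstrict.not_ge hr

end Sublevel

section InnerProduct

variable {E : Type*} [NormedAddCommGroup E] [InnerProductSpace ℝ E]

theorem inner_hasDerivWithinAt_eq_zero_of_norm_eq {f : ℝ → E} {f' : E} {S : Set ℝ} {t R : ℝ}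
    (hS : UniqueDiffWithinAt ℝ S t) (ht : t ∈ S) (hf : HasDerivWithinAt f f' S t)
    (hR : ∀ s ∈ S, ‖f s‖ = R) : ⟪f t, f'⟫ = 0 := by
  have hconst : HasDerivWithinAt (fun s => ‖f s‖ ^ 2) 0 S t :=
    (hasDerivWithinAt_const t S (R ^ 2)).congr (fun s hs => by rw [hR s hs]) (by rw [hR t ht])
  linarith [hS.eq_deriv S hf.norm_sq hconst]

theorem exists_orthonormalBasis_apply_eq {ι : Type*} [Fintype ι]
    (hι : finrank ℝ E = Fintype.card ι) (i : ι) {u : E} (hu : ‖u‖ = 1) :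
    ∃ b : OrthonormalBasis ι ℝ E, b i = u := by
  have : FiniteDimensional ℝ E := .of_finrank_pos (hι ▸ Fintype.card_pos_iff.2 ⟨i⟩)
  have hort : Orthonormal ℝ (({i} : Set ι).domRestrict fun _ => u) :=
    ⟨fun _ => hu, fun j k hjk => absurd (Subsingleton.elim j k) hjk⟩
  obtain ⟨b, hb⟩ := hort.exists_orthonormalBasis_extension_of_card_eq hι
  exact ⟨b, hb i rfl⟩

theorem exists_norm_eq_one_inner_eq_zero (hE : finrank ℝ E = 2) {d : E} (hd : ‖d‖ = 1) :
    ∃ n : E, ‖n‖ = 1 ∧ ⟪n, d⟫ = 0 := by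
  obtain ⟨b, rfl⟩ := exists_orthonormalBasis_apply_eq (ι := Fin 2) (by simpa using hE) 0 hd
  exact ⟨b 1, b.norm_eq_one 1, b.inner_eq_zero (by decide)⟩

theorem sq_inner_eq_of_inner_eq_zero (hE : finrank ℝ E = 2) {n u v : E} (hn : ‖n‖ = 1)
    (hu : ‖u‖ = 1) (huv : ⟪u, v⟫ = 0) : ⟪n, v⟫ ^ 2 = ‖v‖ ^ 2 * (1 - ⟪n, u⟫ ^ 2) := by
  obtain ⟨b, rfl⟩ := exists_orthonormalBasis_apply_eq (ι := Fin 2) (by simpa using hE) 0 hu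
  have hnv : ⟪n, v⟫ = ⟪n, b 1⟫ * ⟪b 1, v⟫ := by
    rw [← b.sum_inner_mul_inner n v, Fin.sum_univ_two, huv, mul_zero, zero_add]
  have hnorm_v : ⟪b 1, v⟫ ^ 2 = ‖v‖ ^ 2 := by
    simpa [Fin.sum_univ_two, huv] using b.sum_sq_inner_right v
  have hnorm_n : ⟪n, b 0⟫ ^ 2 + ⟪n, b 1⟫ ^ 2 = 1 := by
    simpa [Fin.sum_univ_two, hn] using b.sum_sq_inner_left n
  rw [hnv, mul_pow, hnorm_v, ← hnorm_n]
  ring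

/-- The closed strip of half-width `δ` around the hyperplane through `p` with unit normal `n`. In
the plane it is the closed `δ`-neighborhood of a line. -/
def strip (n p : E) (δ : ℝ) : Set E := {x | |⟪n, x - p⟫| ≤ δ}

theorem mem_strip_of_infDist_line_le {n d p x : E} {δ : ℝ} (hn : ‖n‖ = 1) (hnd : ⟪n, d⟫ = 0)
    (hx : infDist x {y | ∃ t : ℝ, y = p + t • d} ≤ δ) : x ∈ strip n p δ := by
  refine le_trans ((le_infDist (s := {y | ∃ t : ℝ, y = p + t • d}) ⟨p, 0, by simp⟩).2 ?_) hx
  rintro _ ⟨t, rfl⟩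
  calc |⟪n, x - p⟫| = |⟪n, x - (p + t • d)⟫| := by
        simp only [inner_sub_right, inner_add_right, inner_smul_right, hnd, mul_zero, add_zero]
    _ ≤ ‖n‖ * ‖x - (p + t • d)‖ := abs_real_inner_le_norm _ _
    _ = dist x (p + t • d) := by rw [hn, one_mul, dist_eq_norm]

theorem mem_strip_of_dist_le {n p x y : E} {δ ρ : ℝ} (hn : ‖n‖ = 1) (hx : x ∈ strip n p δ)
    (hxy : dist x y ≤ ρ) : y ∈ strip n p (δ + ρ) :=
  calc |⟪n, y - p⟫| = |⟪n, x - p⟫ - ⟪n, x - y⟫| := by rw [← inner_sub_right]; abel_nf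
    _ ≤ |⟪n, x - p⟫| + |⟪n, x - y⟫| := abs_sub _ _
    _ ≤ δ + ‖n‖ * ‖x - y‖ := add_le_add hx (abs_real_inner_le_norm _ _)
    _ ≤ δ + ρ := by rw [hn, one_mul, ← dist_eq_norm]; gcongr

theorem strip_inter_infDist_le_subset {n p : E} {δ ρ : ℝ} {K : Set E} (hn : ‖n‖ = 1)
    (hK : IsCompact K) (hK_ne : K.Nonempty) :
    strip n p δ ∩ {x | infDist x K ≤ ρ} ⊆
      strip n p δ ∩ ⋃ y ∈ K ∩ strip n p (δ + ρ), closedBall y ρ := by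
  rintro x ⟨hx, hxK⟩
  obtain ⟨y, hyK, hy⟩ := hK.exists_infDist_eq_dist hK_ne x
  have hxy : dist x y ≤ ρ := hy ▸ hxK
  exact ⟨hx, mem_biUnion ⟨hyK, mem_strip_of_dist_le hn hx hxy⟩ hxy⟩

end InnerProduct

section Volume

variable {E : Type*} [NormedAddCommGroup E] [InnerProductSpace ℝ E] [FiniteDimensional ℝ E]
  [MeasurableSpace E] [BorelSpace E]

theorem volume_forall_abs_inner_sub_le {ι : Type*} [Fintype ι] (b : OrthonormalBasis ι ℝ E)
    (u ρ : ι → ℝ) :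
    volume {x | ∀ i, |⟪b i, x⟫ - u i| ≤ ρ i} = ∏ i, ENNReal.ofReal (2 * ρ i) := by
  have hbox : {x | ∀ i, |⟪b i, x⟫ - u i| ≤ ρ i} =
      (WithLp.ofLp ∘ b.repr) ⁻¹' Icc (u - ρ) (u + ρ) := by
    ext x
    simp only [mem_ofPred_eq, mem_preimage, mem_Icc, Pi.le_def, ← forall_and, Function.comp_apply,
      b.repr_apply_apply, Pi.sub_apply, Pi.add_apply, abs_sub_le_iff]
    grind
  rw [hbox, ((PiLp.volume_preserving_ofLp ι).comp b.measurePreserving_repr).measure_preimage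
    measurableSet_Icc.nullMeasurableSet, Real.volume_Icc_pi]
  exact Finset.prod_congr rfl fun i _ => by simp only [Pi.sub_apply, Pi.add_apply]; ring_nf

theorem volume_strip_inter_closedBall_le {m : ℕ} (hE : finrank ℝ E = m + 1) {n : E}
    (hn : ‖n‖ = 1) (p y : E) (δ ρ : ℝ) :
    volume (strip n p δ ∩ closedBall y ρ) ≤
      ENNReal.ofReal (2 * δ) * ENNReal.ofReal (2 * ρ) ^ m := by
  obtain ⟨b, rfl⟩ := exists_orthonormalBasis_apply_eq (ι := Fin (m + 1)) (by simpa using hE) 0 hn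
  let center : Fin (m + 1) → ℝ := Fin.cons ⟪b 0, p⟫ fun i => ⟪b i.succ, y⟫
  let halfWidth : Fin (m + 1) → ℝ := Fin.cons δ fun _ => ρ
  have hsub : strip (b 0) p δ ∩ closedBall y ρ ⊆
      {x | ∀ i, |⟪b i, x⟫ - center i| ≤ halfWidth i} := by
    rintro x ⟨hx, hxy⟩
    refine Fin.cases ?_ fun i => ?_
    · simpa [center, halfWidth, strip, inner_sub_right] using hx
    · have hi : |⟪b i.succ, x - y⟫| ≤ dist x y := by
        simpa [dist_eq_norm] using abs_real_inner_le_norm (b i.succ) (x - y)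
      simpa [center, halfWidth, inner_sub_right] using hi.trans hxy
  calc volume (strip (b 0) p δ ∩ closedBall y ρ)
      ≤ ∏ i, ENNReal.ofReal (2 * halfWidth i) :=
        (measure_mono hsub).trans_eq (volume_forall_abs_inner_sub_le b center halfWidth)
    _ = ENNReal.ofReal (2 * δ) * ENNReal.ofReal (2 * ρ) ^ m := by
        simp [halfWidth, Fin.prod_univ_succ]

theorem volume_strip_inter_biUnion_closedBall_le {m N : ℕ} (hE : finrank ℝ E = m + 1) {n : E}
    (hn : ‖n‖ = 1) (p : E) (δ ρ : ℝ) {r : ℝ≥0} {A : Set E} (hA : coveringNumber r A ≤ N) :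
    volume (strip n p δ ∩ ⋃ y ∈ A, closedBall y ρ) ≤
      N * (ENNReal.ofReal (2 * δ) * ENNReal.ofReal (2 * (ρ + r)) ^ m) := by
  have hfin : coveringNumber r A ≠ ⊤ := (hA.trans_lt (ENat.natCast_lt_top N)).ne
  obtain ⟨F, -, hF_fin, hF, hF_card⟩ := exists_set_encard_eq_coveringNumber hfin
  have hsub : strip n p δ ∩ ⋃ y ∈ A, closedBall y ρ ⊆
      ⋃ z ∈ F, strip n p δ ∩ closedBall z (ρ + r) := by
    rintro x ⟨hx, hxA⟩
    obtain ⟨y, hyA, hxy⟩ := mem_iUnion₂.1 hxA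
    obtain ⟨z, hzF, hyz⟩ := mem_iUnion₂.1 (hF.subset_iUnion_closedBall hyA)
    exact mem_biUnion hzF ⟨hx, (dist_triangle x y z).trans (add_le_add hxy hyz)⟩
  calc volume (strip n p δ ∩ ⋃ y ∈ A, closedBall y ρ)
      ≤ ∑' z : F, volume (strip n p δ ∩ closedBall (z : E) (ρ + r)) :=
        (measure_mono hsub).trans (measure_biUnion_le volume hF_fin.countable _)
    _ ≤ ∑' _ : F, ENNReal.ofReal (2 * δ) * ENNReal.ofReal (2 * (ρ + r)) ^ m :=
        ENNReal.tsum_le_tsum fun z => volume_strip_inter_closedBall_le hE hn p z δ _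
    _ = F.encard * (ENNReal.ofReal (2 * δ) * ENNReal.ofReal (2 * (ρ + r)) ^ m) :=
        ENNReal.tsum_set_const _ _
    _ ≤ N * (ENNReal.ofReal (2 * δ) * ENNReal.ofReal (2 * (ρ + r)) ^ m) := by
        gcongr
        exact_mod_cast hF_card.trans_le hA

end Volume

section Curve

variable {E : Type*} [NormedAddCommGroup E] [InnerProductSpace ℝ E]

/-- `γ` is a unit-speed curve on `I` whose curvature lies between `c` and `C`. The derivatives
`γ'` and `γ''` are taken within `I`, which makes them one-sided at the endpoints of an interval. -/
structure IsUnitSpeedWithCurvatureIn (γ γ' γ'' : ℝ → E) (c C : ℝ) (I : Set ℝ) : Prop where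
  hasDeriv : ∀ t ∈ I, HasDerivWithinAt γ (γ' t) I t
  hasDeriv2 : ∀ t ∈ I, HasDerivWithinAt γ' (γ'' t) I t
  norm_deriv : ∀ t ∈ I, ‖γ' t‖ = 1
  le_norm_deriv2 : ∀ t ∈ I, c ≤ ‖γ'' t‖
  norm_deriv2_le : ∀ t ∈ I, ‖γ'' t‖ ≤ C

theorem isUnitSpeedWithCurvatureIn_iteratedDerivWithin {γ : ℝ → E} {c C : ℝ} {I : Set ℝ}
    (hI : UniqueDiffOn ℝ I) (hγ : ContDiffOn ℝ 2 γ I)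
    (hspeed : ∀ t ∈ I, ‖iteratedDerivWithin 1 γ I t‖ = 1)
    (hcurv : ∀ t ∈ I, c ≤ ‖iteratedDerivWithin 2 γ I t‖ ∧ ‖iteratedDerivWithin 2 γ I t‖ ≤ C) :
    IsUnitSpeedWithCurvatureIn γ (iteratedDerivWithin 1 γ I) (iteratedDerivWithin 2 γ I) c C I where
  hasDeriv t ht := by
    rw [iteratedDerivWithin_one]
    exact (hγ.differentiableOn two_ne_zero t ht).hasDerivWithinAt
  hasDeriv2 t ht := by
    rw [iteratedDerivWithin_succ (n := 1)]
    exact (hγ.differentiableOn_iteratedDerivWithin (m := 1) (by norm_num) hI t ht).hasDerivWithinAt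
  norm_deriv := hspeed
  le_norm_deriv2 t ht := (hcurv t ht).1
  norm_deriv2_le t ht := (hcurv t ht).2

namespace IsUnitSpeedWithCurvatureIn

variable {γ γ' γ'' : ℝ → E} {c C : ℝ} {I J : Set ℝ}

theorem lipschitzOnWith_one (h : IsUnitSpeedWithCurvatureIn γ γ' γ'' c C I) (hI : Convex ℝ I) :
    LipschitzOnWith 1 γ I :=
  hI.lipschitzOnWith_of_nnnorm_hasDerivWithin_le h.hasDeriv fun t ht => (h.norm_deriv t ht).le

-- In the plane `γ'' ⟂ γ'`, so a component of the unit vector `γ'` bounded away from `±1` forces the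
-- same component of `γ''` to be comparable to `‖γ''‖`.
theorem half_le_abs_inner_deriv_or (h : IsUnitSpeedWithCurvatureIn γ γ' γ'' c C I)
    (hE : finrank ℝ E = 2) (hc : 0 ≤ c) (hI : Convex ℝ I) (hI' : UniqueDiffOn ℝ I) (hJI : J ⊆ I)
    (hJ : ∀ s ∈ J, ∀ t ∈ J, C * |s - t| ≤ 1 / 4) {n : E} (hn : ‖n‖ = 1) :
    (∀ t ∈ J, 1 / 2 ≤ |⟪n, γ' t⟫|) ∨ ∀ t ∈ J, c / 2 ≤ |⟪n, γ'' t⟫| := by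
  by_cases hsteep : ∃ s ∈ J, 3 / 4 ≤ |⟪n, γ' s⟫|
  · obtain ⟨s, hs, hs_steep⟩ := hsteep
    refine .inl fun t ht => ?_
    have hst : |⟪n, γ' s⟫ - ⟪n, γ' t⟫| ≤ 1 / 4 :=
      calc |⟪n, γ' s⟫ - ⟪n, γ' t⟫| ≤ ‖n‖ * ‖γ' s - γ' t‖ := by
            rw [← inner_sub_right]; exact abs_real_inner_le_norm _ _
        _ ≤ C * |s - t| := by
            rw [hn, one_mul]
            exact hI.norm_image_sub_le_of_norm_hasDerivWithin_le h.hasDeriv2 h.norm_deriv2_le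
              (hJI ht) (hJI hs)
        _ ≤ 1 / 4 := hJ s hs t ht
    linarith [abs_sub_abs_le_abs_sub ⟪n, γ' s⟫ ⟪n, γ' t⟫]
  · push Not at hsteep
    refine .inr fun t ht => ?_
    have horth : ⟪γ' t, γ'' t⟫ = 0 := inner_hasDerivWithinAt_eq_zero_of_norm_eq
      (hI' t (hJI ht)) (hJI ht) (h.hasDeriv2 t (hJI ht)) h.norm_deriv
    have hflat : 1 / 4 ≤ 1 - ⟪n, γ' t⟫ ^ 2 := by
      rw [← sq_abs]
      nlinarith [hsteep t ht, abs_nonneg ⟪n, γ' t⟫]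
    refine abs_le_of_sq_le_sq' ?_ (abs_nonneg _) |>.2
    calc (c / 2) ^ 2 = c ^ 2 * (1 / 4) := by ring
      _ ≤ ‖γ'' t‖ ^ 2 * (1 - ⟪n, γ' t⟫ ^ 2) := by gcongr; exact h.le_norm_deriv2 t (hJI ht)
      _ = |⟪n, γ'' t⟫| ^ 2 := by
        rw [sq_abs, sq_inner_eq_of_inner_eq_zero hE hn (h.norm_deriv t (hJI ht)) horth]

theorem packingNumber_inter_preimage_strip_le_three (h : IsUnitSpeedWithCurvatureIn γ γ' γ'' c C I)
    (hE : finrank ℝ E = 2) (hc : 0 < c) (hI : Convex ℝ I) (hI' : UniqueDiffOn ℝ I) (hJI : J ⊆ I)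
    (hJ_conn : J.OrdConnected) (hJ : ∀ s ∈ J, ∀ t ∈ J, C * |s - t| ≤ 1 / 4) {n : E}
    (hn : ‖n‖ = 1) (p : E) {η : ℝ} {r : ℝ≥0} (hr : 0 < r) (hηr : 4 * η < r)
    (hηr2 : 8 * η ≤ c * r ^ 2) : packingNumber r (J ∩ γ ⁻¹' strip n p η) ≤ 3 := by
  have hheight : ∀ t ∈ J, HasDerivWithinAt (fun s => ⟪n, γ s - p⟫) ⟪n, γ' t⟫ J t := fun t ht =>
    (innerSL ℝ n).hasFDerivAt.comp_hasDerivWithinAt t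
      (((h.hasDeriv t (hJI ht)).mono hJI).sub_const p)
  have hslope : ∀ t ∈ J, HasDerivWithinAt (fun s => ⟪n, γ' s⟫) ⟪n, γ'' t⟫ J t := fun t ht =>
    (innerSL ℝ n).hasFDerivAt.comp_hasDerivWithinAt t ((h.hasDeriv2 t (hJI ht)).mono hJI)
  rcases h.half_le_abs_inner_deriv_or hE hc.le hI hI' hJI hJ hn with hsteep | hcurved
  · exact (packingNumber_sublevel_le_one_of_le_abs_deriv hJ_conn hheight hsteep
      (by linarith)).trans (by norm_num)
  · exact packingNumber_sublevel_le_three_of_le_abs_deriv2 (half_pos hc) hJ_conn hheight hslope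
      hcurved hr (by linarith)

end IsUnitSpeedWithCurvatureIn

theorem exists_coveringNumber_image_inter_strip_le (hE : finrank ℝ E = 2) {c C : ℝ} (hc : 0 < c)
    (hC : 0 < C) {I : Set ℝ} (hI : Convex ℝ I) (hI' : UniqueDiffOn ℝ I) (hI_cpt : IsCompact I) :
    ∃ N : ℕ, ∀ γ γ' γ'' : ℝ → E, IsUnitSpeedWithCurvatureIn γ γ' γ'' c C I →
      ∀ n p : E, ‖n‖ = 1 → ∀ (η : ℝ) (r : ℝ≥0), 0 < r → 4 * η < r → 8 * η ≤ c * r ^ 2 →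
        coveringNumber r (γ '' I ∩ strip n p η) ≤ N := by
  obtain ⟨F, -, hF_fin, hF⟩ := hI_cpt.finite_cover_balls (e := 1 / (8 * C)) (by positivity)
  lift F to Finset ℝ using hF_fin
  refine ⟨F.card * 3, fun γ γ' γ'' h n p hn η r hr hηr hηr2 => ?_⟩
  have hpiece : ∀ y, packingNumber r ((I ∩ ball y (1 / (8 * C))) ∩ γ ⁻¹' strip n p η) ≤ 3 := by
    refine fun y => h.packingNumber_inter_preimage_strip_le_three hE hc hI hI' inter_subset_left
      (hI.inter (convex_ball y _)).ordConnected (fun s hs t ht => ?_) hn p hr hηr hηr2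
    have hst : |s - t| ≤ 1 / (8 * C) + 1 / (8 * C) :=
      (dist_triangle_right s t y).trans (add_le_add hs.2.le ht.2.le)
    calc C * |s - t| ≤ C * (1 / (8 * C) + 1 / (8 * C)) := by gcongr
      _ = 1 / 4 := by field_simp; norm_num
  have hcover : I ∩ γ ⁻¹' strip n p η ⊆
      ⋃ y ∈ F, (I ∩ ball y (1 / (8 * C))) ∩ γ ⁻¹' strip n p η := fun t ht => by
    obtain ⟨y, hy, hty⟩ := mem_iUnion₂.1 (hF ht.1)
    exact mem_biUnion hy ⟨⟨ht.1, hty⟩, ht.2⟩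
  calc coveringNumber r (γ '' I ∩ strip n p η)
      ≤ coveringNumber r (I ∩ γ ⁻¹' strip n p η) := by
        rw [← image_inter_preimage]
        simpa only [one_mul] using coveringNumber_image_le_of_lipschitzOnWith r
          ((h.lipschitzOnWith_one hI).mono inter_subset_left)
    _ ≤ packingNumber r (I ∩ γ ⁻¹' strip n p η) := coveringNumber_le_packingNumber _ _
    _ ≤ ∑ y ∈ F, packingNumber r ((I ∩ ball y (1 / (8 * C))) ∩ γ ⁻¹' strip n p η) :=
        packingNumber_le_sum_of_subset_biUnion F _ hcover
    _ ≤ ∑ _y ∈ F, 3 := Finset.sum_le_sum fun y _ => hpiece y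
    _ = (F.card * 3 : ℕ) := by simp

theorem exists_coveringNumber_sqrt_image_inter_strip_le (hE : finrank ℝ E = 2) {c C : ℝ}
    (hc : 0 < c) (hC : 0 < C) {I : Set ℝ} (hI : Convex ℝ I) (hI' : UniqueDiffOn ℝ I)
    (hI_cpt : IsCompact I) :
    ∃ (N : ℕ) (D : ℝ≥0), ∀ γ γ' γ'' : ℝ → E, IsUnitSpeedWithCurvatureIn γ γ' γ'' c C I →
      ∀ n p : E, ‖n‖ = 1 → ∀ δ : ℝ, 0 < δ → δ ≤ 1 →
        coveringNumber (D * (√δ).toNNReal) (γ '' I ∩ strip n p (2 * δ)) ≤ N := by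
  obtain ⟨N, hN⟩ := exists_coveringNumber_image_inter_strip_le hE hc hC hI hI' hI_cpt
  let D : ℝ≥0 := 9 + 16 / c.toNNReal
  have hD : (D : ℝ) = 9 + 16 / c := by simp [D, hc.le]
  have hcD : 16 ≤ c * D ^ 2 := by
    have hc_inv : 0 < 16 / c := by positivity
    calc 16 = c * (16 / c) := by field_simp
      _ ≤ c * D ^ 2 := by rw [hD]; gcongr; nlinarith
  refine ⟨N, D, fun γ γ' γ'' h n p hn δ hδ hδ1 => ?_⟩
  have hδ_le_sqrt : δ ≤ √δ := Real.le_sqrt_of_sq_le (by nlinarith)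
  have hr : ((D * (√δ).toNNReal : ℝ≥0) : ℝ) = D * √δ := by simp
  refine hN γ γ' γ'' h n p hn (2 * δ) _ (by positivity) ?_ ?_
  · have hD9 : (9 : ℝ) ≤ D := by rw [hD]; linarith [show 0 < 16 / c by positivity]
    rw [hr]
    nlinarith [Real.sqrt_pos.2 hδ]
  · calc 8 * (2 * δ) = 16 * δ := by ring
      _ ≤ c * D ^ 2 * δ := by gcongr
      _ = c * ((D * (√δ).toNNReal : ℝ≥0) : ℝ) ^ 2 := by rw [hr, mul_pow, Real.sq_sqrt hδ.le]; ring

end Curve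

theorem natCast_mul_ofReal_mul_ofReal_le {δ D : ℝ} (N : ℕ) (hD : 0 ≤ D) (hδ : 0 < δ)
    (hδ1 : δ ≤ 1) :
    N * (ENNReal.ofReal (2 * δ) * ENNReal.ofReal (2 * (δ + D * √δ))) ≤
      ENNReal.ofReal (4 * (N + 1) * (D + 1) * δ ^ ((3 : ℝ) / 2)) := by
  have hpow : δ ^ ((3 : ℝ) / 2) = δ * √δ := by
    rw [Real.sqrt_eq_rpow, show (3 : ℝ) / 2 = 1 + 1 / 2 by norm_num, Real.rpow_add hδ,
      Real.rpow_one]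
  have hδ_le_sqrt : δ ≤ √δ := Real.le_sqrt_of_sq_le (by nlinarith)
  rw [← ENNReal.ofReal_natCast, ← ENNReal.ofReal_mul (by positivity),
    ← ENNReal.ofReal_mul (by positivity), hpow]
  refine ENNReal.ofReal_le_ofReal ?_
  calc N * (2 * δ * (2 * (δ + D * √δ))) ≤ (N + 1) * (2 * δ * (2 * (√δ + D * √δ))) := by
        gcongr; linarith
    _ = 4 * (N + 1) * (D + 1) * (δ * √δ) := by ring

/-- the Euclidean geometric fact behind Lemma 5.1 of the paper: the
`δ`-neighborhood of a unit-speed `C²` curve with curvature bounded between `c` and `C₁`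
meets the `δ`-neighborhood of any line in a set of Lebesgue measure `O(δ^{3/2})`. -/
theorem curve_line_neighborhood_intersection :
    ∀ ε₀ : ℝ, 0 < ε₀ →
    ∀ c C₁ : ℝ, 0 < c → c ≤ C₁ →
    ∃ C : ℝ, 0 < C ∧
      ∀ γ : ℝ → ℝ2, ContDiffOn ℝ 2 γ (Set.Icc 0 ε₀) →
        (∀ t ∈ Set.Icc (0 : ℝ) ε₀, ‖iteratedDerivWithin 1 γ (Set.Icc 0 ε₀) t‖ = 1) →
        (∀ t ∈ Set.Icc (0 : ℝ) ε₀,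
          c ≤ ‖iteratedDerivWithin 2 γ (Set.Icc 0 ε₀) t‖ ∧
            ‖iteratedDerivWithin 2 γ (Set.Icc 0 ε₀) t‖ ≤ C₁) →
      ∀ p d : ℝ2, ‖d‖ = 1 →
      ∀ δ : ℝ, 0 < δ → δ ≤ 1 →
        volume ({x : ℝ2 | Metric.infDist x {y : ℝ2 | ∃ t : ℝ, y = p + t • d} ≤ δ} ∩
            {x : ℝ2 | Metric.infDist x (γ '' Set.Icc 0 ε₀) ≤ δ}) ≤
          ENNReal.ofReal (C * δ ^ ((3 : ℝ) / 2)) := by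
  intro ε₀ hε c C₁ hc hcC₁
  have hfinrank : finrank ℝ ℝ2 = 1 + 1 := finrank_euclideanSpace_fin
  have hI : UniqueDiffOn ℝ (Icc 0 ε₀) := uniqueDiffOn_Icc hε
  obtain ⟨N, D, hcover⟩ := exists_coveringNumber_sqrt_image_inter_strip_le hfinrank hc
    (hc.trans_le hcC₁) (convex_Icc 0 ε₀) hI isCompact_Icc
  refine ⟨4 * (N + 1) * (D + 1), by positivity, ?_⟩
  intro γ hγ hspeed hcurv p d hd δ hδ hδ1
  obtain ⟨n, hn, hnd⟩ := exists_norm_eq_one_inner_eq_zero hfinrank hd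
  have hcover_γ := hcover γ _ _ (isUnitSpeedWithCurvatureIn_iteratedDerivWithin hI hγ hspeed hcurv)
    n p hn δ hδ hδ1
  have hγI : IsCompact (γ '' Icc 0 ε₀) := isCompact_Icc.image_of_continuousOn hγ.continuousOn
  have hγI_ne : (γ '' Icc 0 ε₀).Nonempty := (nonempty_Icc.2 hε.le).image γ
  calc _ ≤ volume (strip n p δ ∩ {x | infDist x (γ '' Icc 0 ε₀) ≤ δ}) :=
        measure_mono (inter_subset_inter_left _ fun _ => mem_strip_of_infDist_line_le hn hnd)
    _ ≤ volume (strip n p δ ∩ ⋃ y ∈ γ '' Icc 0 ε₀ ∩ strip n p (2 * δ), closedBall y δ) :=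
        measure_mono (two_mul δ ▸ strip_inter_infDist_le_subset hn hγI hγI_ne)
    _ ≤ N * (ENNReal.ofReal (2 * δ) * ENNReal.ofReal (2 * (δ + D * √δ))) := by
        simpa using volume_strip_inter_biUnion_closedBall_le hfinrank hn p δ δ hcover_γ
    _ ≤ ENNReal.ofReal (4 * (N + 1) * (D + 1) * δ ^ ((3 : ℝ) / 2)) :=
        natCast_mul_ofReal_mul_ofReal_le N D.coe_nonneg hδ hδ1
end
end

section
/- For each α ∈ (1,2) there exist a finite Borel measure μ on the unit sphere S² ⊂ ℝ³ satisfying μ(B(x,r)) ≤ C_μ r^α for all x ∈ ℝ³ and all r > 0, and a strictly increasing sequence of positive integers (k_n), such that for every p ≥ 2 there are constants 0 < c_p ≤ C_p with: c_p · k_n^{1/4 − (α−1)/(2p)} ≤ ( ∫_{S²} |H_{k_n}|^p dμ )^{1/p} ≤ C_p · k_n^{1/4 − (α−1)/(2p)} for all n. -/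
open MeasureTheory Metric Set
open scoped ENNReal

noncomputable section

abbrev ℝ3 : Type := EuclideanSpace ℝ (Fin 3)

/-- The highest-weight spherical harmonic `H_k`: the restriction to `S²` of the harmonic
polynomial `k^{1/4}(x₁ + i x₂)^k`. -/
def highestWeight (k : ℕ) (x : ℝ3) : ℂ :=
  ((k : ℝ) ^ ((1 : ℝ) / 4) : ℝ) * ((x 0 : ℂ) + Complex.I * (x 1 : ℂ)) ^ k

/-!
On the unit sphere `|H_k| = k^{1/4} (1 - x₃²)^{k/2}`, so `H_k` concentrates in the band
`|x₃| ≲ k^{-1/2}` around the equator. Spread mass uniformly in the direction of the equator and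
so that a band of height `h` carries mass about `h^{α-1}`. Balls of radius `r` then have mass at
most about `r · r^{α-1} = r^α`, while `∫ |H_k|^p dμ ≍ k^{p/4} · (k^{-1/2})^{α-1}`. Such a height
distribution is the image of Lebesgue measure under `u ↦ u^b` with `b = 1/(α-1) ≥ 1`.
-/

lemma dist_le_dist_rpow_rpow_inv {b u v : ℝ} (hb : 1 ≤ b) (hu : 0 ≤ u) (hv : 0 ≤ v) :
    dist u v ≤ dist (u ^ b) (v ^ b) ^ b⁻¹ := by
  wlog huv : u ≤ v generalizing u v
  · rw [dist_comm u, dist_comm (u ^ b)]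
    exact this hv hu (le_of_not_ge huv)
  have superadditive : u ^ b + (v - u) ^ b ≤ v ^ b := by
    simpa only [add_sub_cancel] using Real.add_rpow_le_rpow_add hu (sub_nonneg.2 huv) hb
  rw [Real.le_rpow_inv_iff_of_pos dist_nonneg dist_nonneg (by linarith), dist_comm u,
    dist_comm (u ^ b), Real.dist_eq, abs_of_nonneg (sub_nonneg.2 huv)]
  exact (le_sub_iff_add_le'.2 superadditive).trans (le_abs_self _)

lemma volume_Ici_inter_rpow_preimage_ball_le {b : ℝ} (hb : 1 ≤ b) (c r : ℝ) :
    volume (Ici (0 : ℝ) ∩ (· ^ b) ⁻¹' ball c r) ≤ ENNReal.ofReal ((2 * r) ^ b⁻¹) := by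
  refine (Real.volume_le_diam _).trans (ediam_le_of_forall_dist_le ?_)
  rintro u ⟨hu, hur⟩ v ⟨hv, hvr⟩
  have dist_le : dist (u ^ b) (v ^ b) ≤ 2 * r := by
    linarith [dist_triangle_right (u ^ b) (v ^ b) c, mem_ball.1 hur, mem_ball.1 hvr]
  exact (dist_le_dist_rpow_rpow_inv hb hu hv).trans
    (Real.rpow_le_rpow dist_nonneg dist_le (by positivity))

section CuspIntegral

variable {a b s : ℝ}

lemma one_sub_rpow_sq_nonneg {u : ℝ} (hb : 0 ≤ b) (hu : u ∈ Icc (0 : ℝ) 1) :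
    0 ≤ 1 - (u ^ b) ^ 2 :=
  sub_nonneg.2 <| pow_le_one₀ (Real.rpow_nonneg hu.1 b) (Real.rpow_le_one hu.1 hu.2 hb)

lemma integrableOn_Icc_one_sub_rpow_sq_rpow (hb : 0 ≤ b) (hs : 0 ≤ s) :
    IntegrableOn (fun u : ℝ ↦ (1 - (u ^ b) ^ 2) ^ s) (Icc 0 a) := by
  have base_continuous : Continuous fun u : ℝ ↦ 1 - (u ^ b) ^ 2 :=
    continuous_const.sub ((Real.continuous_rpow_const hb).pow 2)
  exact (base_continuous.rpow_const fun _ ↦ Or.inr hs).continuousOn.integrableOn_Icc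

lemma one_sub_rpow_sq_rpow_le_exp {u : ℝ} (hb : 0 ≤ b) (hs : 0 ≤ s) (hu : u ∈ Icc (0 : ℝ) 1) :
    (1 - (u ^ b) ^ 2) ^ s ≤ Real.exp (-s * u ^ (2 * b)) := by
  have sq_eq : (u ^ b) ^ 2 = u ^ (2 * b) := by
    rw [mul_comm, Real.rpow_mul hu.1, Real.rpow_two]
  calc (1 - (u ^ b) ^ 2) ^ s ≤ Real.exp (-(u ^ b) ^ 2) ^ s :=
        Real.rpow_le_rpow (one_sub_rpow_sq_nonneg hb hu) (Real.one_sub_le_exp_neg _) hs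
    _ = Real.exp (-s * u ^ (2 * b)) := by rw [← Real.exp_mul, sq_eq]; ring_nf

lemma integral_Icc_one_sub_rpow_sq_rpow_le (hb : 0 < b) (hs : 0 < s) (ha : a ≤ 1) :
    ∫ u in Icc 0 a, (1 - (u ^ b) ^ 2) ^ s ≤ s ^ (-(b⁻¹ / 2)) * Real.Gamma (b⁻¹ / 2 + 1) := by
  have exp_integrable : IntegrableOn (fun u : ℝ ↦ Real.exp (-s * u ^ (2 * b))) (Ioi 0) := by
    simpa only [Real.rpow_zero, one_mul] using
      integrableOn_rpow_mul_exp_neg_mul_rpow neg_one_lt_zero (by positivity : 0 < 2 * b) hs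
  calc ∫ u in Icc 0 a, (1 - (u ^ b) ^ 2) ^ s
      = ∫ u in Ioc 0 a, (1 - (u ^ b) ^ 2) ^ s := integral_Icc_eq_integral_Ioc
    _ ≤ ∫ u in Ioc 0 a, Real.exp (-s * u ^ (2 * b)) :=
        setIntegral_mono_on
          ((integrableOn_Icc_one_sub_rpow_sq_rpow hb.le hs.le).mono_set Ioc_subset_Icc_self)
          (exp_integrable.mono_set Ioc_subset_Ioi_self) measurableSet_Ioc
          fun u hu ↦ one_sub_rpow_sq_rpow_le_exp hb.le hs.le ⟨hu.1.le, hu.2.trans ha⟩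
    _ ≤ ∫ u in Ioi 0, Real.exp (-s * u ^ (2 * b)) :=
        setIntegral_mono_set exp_integrable (ae_of_all _ fun u ↦ (Real.exp_pos _).le)
          Ioc_subset_Ioi_self.eventuallyLE
    _ = s ^ (-(b⁻¹ / 2)) * Real.Gamma (b⁻¹ / 2 + 1) := by
        rw [integral_exp_neg_mul_rpow (by positivity) hs]
        congr 2 <;> field_simp

variable {k q : ℝ}

lemma one_sub_rpow_sq_rpow_le_of_mem_Icc_scale {u : ℝ} (hb : 0 < b) (ha : a ∈ Icc (0 : ℝ) 1)
    (hk : 1 ≤ k) (hq : 0 ≤ q) (hu : u ∈ Icc 0 (a * k ^ (-(b⁻¹ / 2)))) :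
    (1 - (a ^ b) ^ 2) ^ q ≤ (1 - (u ^ b) ^ 2) ^ (k * q) := by
  have hk_pos : 0 < k := by linarith
  have scale_rpow_sq : ((a * k ^ (-(b⁻¹ / 2))) ^ b) ^ 2 = (a ^ b) ^ 2 / k := by
    rw [Real.mul_rpow ha.1 (by positivity), mul_pow, ← Real.rpow_mul hk_pos.le,
      ← Real.rpow_mul_natCast hk_pos.le, div_eq_mul_inv ((a ^ b) ^ 2), ← Real.rpow_neg_one k]
    congr 2
    field_simp
    norm_num
  have rpow_sq_le : (u ^ b) ^ 2 ≤ (a ^ b) ^ 2 / k := by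
    rw [← scale_rpow_sq]
    exact pow_le_pow_left₀ (Real.rpow_nonneg hu.1 b) (Real.rpow_le_rpow hu.1 hu.2 hb.le) 2
  have a_nonneg := one_sub_rpow_sq_nonneg hb.le ha
  have div_le_one : (a ^ b) ^ 2 / k ≤ 1 := div_le_one_of_le₀ (by linarith) hk_pos.le
  have bernoulli : 1 - (a ^ b) ^ 2 ≤ (1 - (u ^ b) ^ 2) ^ k :=
    calc 1 - (a ^ b) ^ 2 = 1 + k * -((a ^ b) ^ 2 / k) := by field_simp; ring
      _ ≤ (1 + -((a ^ b) ^ 2 / k)) ^ k := one_add_mul_self_le_rpow_one_add (by linarith) hk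
      _ ≤ (1 - (u ^ b) ^ 2) ^ k := Real.rpow_le_rpow (by linarith) (by linarith) hk_pos.le
  rw [Real.rpow_mul (by linarith)]
  exact Real.rpow_le_rpow a_nonneg bernoulli hq

lemma le_integral_Icc_one_sub_rpow_sq_rpow (hb : 0 < b) (ha : a ∈ Icc (0 : ℝ) 1) (hk : 1 ≤ k)
    (hq : 0 ≤ q) :
    a * k ^ (-(b⁻¹ / 2)) * (1 - (a ^ b) ^ 2) ^ q ≤
      ∫ u in Icc 0 a, (1 - (u ^ b) ^ 2) ^ (k * q) := by
  set δ := a * k ^ (-(b⁻¹ / 2))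
  have hkq : 0 ≤ k * q := by positivity
  have δ_nonneg : 0 ≤ δ := mul_nonneg ha.1 (by positivity)
  have δ_le : δ ≤ a := mul_le_of_le_one_right ha.1 <|
    Real.rpow_le_one_of_one_le_of_nonpos hk (neg_nonpos.2 (by positivity))
  calc δ * (1 - (a ^ b) ^ 2) ^ q = ∫ _ in Icc 0 δ, (1 - (a ^ b) ^ 2) ^ q := by simp [δ_nonneg]
    _ ≤ ∫ u in Icc 0 δ, (1 - (u ^ b) ^ 2) ^ (k * q) :=
        setIntegral_mono_on (by simp) (integrableOn_Icc_one_sub_rpow_sq_rpow hb.le hkq)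
          measurableSet_Icc fun u hu ↦ one_sub_rpow_sq_rpow_le_of_mem_Icc_scale hb ha hk hq hu
    _ ≤ ∫ u in Icc 0 a, (1 - (u ^ b) ^ 2) ^ (k * q) :=
        setIntegral_mono_set (integrableOn_Icc_one_sub_rpow_sq_rpow hb.le hkq)
          ((ae_restrict_mem measurableSet_Icc).mono fun u hu ↦ Real.rpow_nonneg
            (one_sub_rpow_sq_nonneg hb.le ⟨hu.1, hu.2.trans ha.2⟩) _)
          (Icc_subset_Icc_right δ_le).eventuallyLE

end CuspIntegral

lemma norm_highestWeight_of_mem_sphere (k : ℕ) {x : ℝ3} (hx : x ∈ sphere (0 : ℝ3) 1) :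
    ‖highestWeight k x‖ = (k : ℝ) ^ ((1 : ℝ) / 4) * √(1 - x 2 ^ 2) ^ k := by
  have sum_sq : x 0 ^ 2 + x 1 ^ 2 + x 2 ^ 2 = 1 := by
    simpa [EuclideanSpace.norm_eq, Fin.sum_univ_three] using hx
  rw [highestWeight, norm_mul, norm_pow, mul_comm Complex.I, Complex.norm_add_mul_I,
    Complex.norm_real, Real.norm_of_nonneg (by positivity), ← sum_sq, add_sub_cancel_right]

lemma norm_highestWeight_rpow_of_mem_sphere (k : ℕ) (p : ℝ) {x : ℝ3}
    (hx : x ∈ sphere (0 : ℝ3) 1) :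
    ‖highestWeight k x‖ ^ p = (k : ℝ) ^ (p / 4) * (1 - x 2 ^ 2) ^ (k * (p / 2)) := by
  have height_le : |x 2| ≤ 1 := (PiLp.norm_apply_le x 2).trans_eq (mem_sphere_zero_iff_norm.1 hx)
  have height_sq : 0 ≤ 1 - x 2 ^ 2 := sub_nonneg.2 ((sq_le_one_iff_abs_le_one _).2 height_le)
  rw [norm_highestWeight_of_mem_sphere k hx, Real.mul_rpow (by positivity) (by positivity),
    ← Real.rpow_mul (by positivity), Real.sqrt_eq_rpow, ← Real.rpow_natCast,
    ← Real.rpow_mul height_sq, ← Real.rpow_mul height_sq]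
  congr 2 <;> ring

/-- The graph parametrization `(s, u) ↦ (s, √(1 - s² - z²), z)` of the sphere over the
`x₁x₃`-plane, with the height reparametrized as `z = u ^ b`. -/
def equatorialPatch (b : ℝ) (q : ℝ × ℝ) : ℝ3 :=
  !₂[q.1, √(1 - q.1 ^ 2 - (q.2 ^ b) ^ 2), q.2 ^ b]

/-- The measure on the sphere whose projection to the `x₁x₃`-plane is Lebesgue measure in `x₁` times
the law of `u ^ b` in `x₃`, both parameters ranging over `[0, 1/2]`. It has dimension `1 + 1/b`. -/
def equatorialMeasure (b : ℝ) : Measure ℝ3 :=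
  (volume.restrict (Icc (0 : ℝ) (1 / 2) ×ˢ Icc (0 : ℝ) (1 / 2))).map (equatorialPatch b)

section EquatorialMeasure

variable {b : ℝ}

lemma continuous_equatorialPatch (hb : 0 ≤ b) : Continuous (equatorialPatch b) := by
  have height_continuous : Continuous fun q : ℝ × ℝ ↦ q.2 ^ b :=
    (Real.continuous_rpow_const hb).comp continuous_snd
  have radical_continuous : Continuous fun q : ℝ × ℝ ↦ √(1 - q.1 ^ 2 - (q.2 ^ b) ^ 2) :=
    ((continuous_const.sub (continuous_fst.pow 2)).sub (height_continuous.pow 2)).sqrt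
  refine (PiLp.continuous_toLp 2 _).comp (continuous_pi fun i ↦ ?_)
  fin_cases i
  exacts [continuous_fst, radical_continuous, height_continuous]

lemma equatorialPatch_mem_sphere (hb : 1 ≤ b) {q : ℝ × ℝ}
    (hq : q ∈ Icc (0 : ℝ) (1 / 2) ×ˢ Icc (0 : ℝ) (1 / 2)) :
    equatorialPatch b q ∈ sphere (0 : ℝ3) 1 := by
  obtain ⟨⟨hs₀, hs⟩, hu₀, hu⟩ := hq
  have height_nonneg : 0 ≤ q.2 ^ b := Real.rpow_nonneg hu₀ b
  have height_le : q.2 ^ b ≤ 1 / 2 :=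
    (Real.rpow_le_self_of_le_one hu₀ (by linarith) hb).trans hu
  have radicand_nonneg : 0 ≤ 1 - q.1 ^ 2 - (q.2 ^ b) ^ 2 := by nlinarith
  suffices q.1 ^ 2 + √(1 - q.1 ^ 2 - (q.2 ^ b) ^ 2) ^ 2 + (q.2 ^ b) ^ 2 = 1 by
    simpa [EuclideanSpace.norm_eq, Fin.sum_univ_three, equatorialPatch] using this
  rw [Real.sq_sqrt radicand_nonneg]
  ring

lemma isFiniteMeasure_equatorialMeasure (b : ℝ) : IsFiniteMeasure (equatorialMeasure b) := by
  have : IsFiniteMeasure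
      (volume.restrict (Icc (0 : ℝ) (1 / 2) ×ˢ Icc (0 : ℝ) (1 / 2))) :=
    isFiniteMeasure_restrict.2 (isCompact_Icc.prod isCompact_Icc).measure_ne_top
  exact Measure.isFiniteMeasure_map _ _

lemma ae_equatorialMeasure_mem_sphere (hb : 1 ≤ b) :
    ∀ᵐ x ∂equatorialMeasure b, x ∈ sphere (0 : ℝ3) 1 := by
  refine (ae_map_iff (continuous_equatorialPatch (by linarith)).aemeasurable
    isClosed_sphere.measurableSet).2 ?_
  exact (ae_restrict_mem (measurableSet_Icc.prod measurableSet_Icc)).mono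
    fun q hq ↦ equatorialPatch_mem_sphere hb hq

lemma equatorialPatch_preimage_ball_subset (b : ℝ) (x : ℝ3) (r : ℝ) :
    equatorialPatch b ⁻¹' ball x r ⊆ ball (x 0) r ×ˢ ((· ^ b) ⁻¹' ball (x 2) r) := by
  intro q hq
  exact ⟨(PiLp.dist_apply_le (equatorialPatch b q) x 0).trans_lt hq,
    (PiLp.dist_apply_le (equatorialPatch b q) x 2).trans_lt hq⟩

lemma equatorialMeasure_ball_le (hb : 1 ≤ b) (x : ℝ3) {r : ℝ} (hr : 0 ≤ r) :
    equatorialMeasure b (ball x r) ≤ ENNReal.ofReal ((2 * r) ^ (1 + b⁻¹)) := by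
  have hb_pos : 0 < b := by linarith
  have measurable_patch := (continuous_equatorialPatch hb_pos.le).measurable
  calc equatorialMeasure b (ball x r)
      = volume (equatorialPatch b ⁻¹' ball x r ∩ Icc (0 : ℝ) (1 / 2) ×ˢ Icc (0 : ℝ) (1 / 2)) := by
        rw [equatorialMeasure, Measure.map_apply measurable_patch measurableSet_ball,
          Measure.restrict_apply (measurable_patch measurableSet_ball)]
    _ ≤ volume (ball (x 0) r ×ˢ (Ici 0 ∩ (· ^ b) ⁻¹' ball (x 2) r)) := by
        refine measure_mono fun q ⟨hq, hq_square⟩ ↦ ?_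
        have hq_ball := equatorialPatch_preimage_ball_subset b x r hq
        exact ⟨hq_ball.1, hq_square.2.1, hq_ball.2⟩
    _ ≤ ENNReal.ofReal (2 * r) * ENNReal.ofReal ((2 * r) ^ b⁻¹) := by
        rw [Measure.volume_eq_prod, Measure.prod_prod, Real.volume_ball]
        gcongr
        exact volume_Ici_inter_rpow_preimage_ball_le hb _ _
    _ = ENNReal.ofReal ((2 * r) ^ (1 + b⁻¹)) := by
        rw [← ENNReal.ofReal_mul (by positivity),
          Real.rpow_one_add' (by positivity) (by positivity)]

lemma integral_norm_highestWeight_rpow_equatorialMeasure (hb : 1 ≤ b) (k : ℕ) (p : ℝ) :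
    ∫ x, ‖highestWeight k x‖ ^ p ∂equatorialMeasure b =
      (k : ℝ) ^ (p / 4) *
        (1 / 2 * ∫ u in Icc (0 : ℝ) (1 / 2), (1 - (u ^ b) ^ 2) ^ (k * (p / 2))) := by
  calc ∫ x, ‖highestWeight k x‖ ^ p ∂equatorialMeasure b
      = ∫ x, (k : ℝ) ^ (p / 4) * (1 - x 2 ^ 2) ^ (k * (p / 2)) ∂equatorialMeasure b :=
        integral_congr_ae <| (ae_equatorialMeasure_mem_sphere hb).mono
          fun x hx ↦ norm_highestWeight_rpow_of_mem_sphere k p hx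
    _ = (k : ℝ) ^ (p / 4) * ∫ q in Icc (0 : ℝ) (1 / 2) ×ˢ Icc (0 : ℝ) (1 / 2),
          (1 - (q.2 ^ b) ^ 2) ^ (k * (p / 2)) := by
        rw [integral_const_mul, equatorialMeasure, integral_map
          (continuous_equatorialPatch (by linarith)).aemeasurable
          (Measurable.aestronglyMeasurable (by fun_prop))]
        rfl
    _ = _ := by
        rw [Measure.volume_eq_prod, ← Measure.prod_restrict,
          integral_fun_snd fun u : ℝ ↦ (1 - (u ^ b) ^ 2) ^ (k * (p / 2))]
        simp

lemma exists_integral_norm_highestWeight_rpow_equatorialMeasure_bounds (hb : 1 ≤ b) {p : ℝ}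
    (hp : 0 < p) :
    ∃ c C : ℝ, 0 < c ∧ c ≤ C ∧ ∀ k : ℕ, 0 < k →
      c * (k : ℝ) ^ (p / 4 - b⁻¹ / 2) ≤ ∫ x, ‖highestWeight k x‖ ^ p ∂equatorialMeasure b ∧
      ∫ x, ‖highestWeight k x‖ ^ p ∂equatorialMeasure b ≤ C * (k : ℝ) ^ (p / 4 - b⁻¹ / 2) := by
  have hb_pos : 0 < b := by linarith
  set c : ℝ := 1 / 2 * (1 / 2 * (1 - ((1 / 2 : ℝ) ^ b) ^ 2) ^ (p / 2))
  set C : ℝ := 1 / 2 * ((p / 2) ^ (-(b⁻¹ / 2)) * Real.Gamma (b⁻¹ / 2 + 1))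
  have c_pos : 0 < c := by
    have half_rpow_lt_one : (1 / 2 : ℝ) ^ b < 1 :=
      Real.rpow_lt_one (by norm_num) (by norm_num) hb_pos
    have base_pos : 0 < 1 - ((1 / 2 : ℝ) ^ b) ^ 2 :=
      sub_pos.2 (pow_lt_one₀ (by positivity) half_rpow_lt_one two_ne_zero)
    positivity
  have bounds (k : ℕ) (hk : 0 < k) :
      c * (k : ℝ) ^ (p / 4 - b⁻¹ / 2) ≤ ∫ x, ‖highestWeight k x‖ ^ p ∂equatorialMeasure b ∧
      ∫ x, ‖highestWeight k x‖ ^ p ∂equatorialMeasure b ≤ C * (k : ℝ) ^ (p / 4 - b⁻¹ / 2) := by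
    have hk_pos : (0 : ℝ) < k := Nat.cast_pos.2 hk
    have hkp : (k * (p / 2)) ^ (-(b⁻¹ / 2)) = (k : ℝ) ^ (-(b⁻¹ / 2)) * (p / 2) ^ (-(b⁻¹ / 2)) :=
      Real.mul_rpow hk_pos.le (by positivity)
    have lower := le_integral_Icc_one_sub_rpow_sq_rpow hb_pos (a := 1 / 2) (by norm_num)
      (Nat.one_le_cast.2 hk) (by positivity : 0 ≤ p / 2)
    have upper := integral_Icc_one_sub_rpow_sq_rpow_le hb_pos (a := 1 / 2)
      (by positivity : 0 < k * (p / 2)) (by norm_num)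
    rw [hkp] at upper
    rw [integral_norm_highestWeight_rpow_equatorialMeasure hb, sub_eq_add_neg,
      Real.rpow_add hk_pos, mul_left_comm c, mul_left_comm C]
    constructor
    · exact mul_le_mul_of_nonneg_left (by simp only [c]; linarith) (by positivity)
    · exact mul_le_mul_of_nonneg_left (by simp only [C]; linarith) (by positivity)
  exact ⟨c, C, c_pos, by simpa using (bounds 1 one_pos).1.trans (bounds 1 one_pos).2, bounds⟩

end EquatorialMeasure

theorem sharpness_fractal_measure_general {α : ℝ} (hα₁ : 1 < α) (hα₂ : α ≤ 2) :
    ∃ (μ : Measure ℝ3) (Cμ : ℝ), IsFiniteMeasure μ ∧ 0 < Cμ ∧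
      μ (sphere (0 : ℝ3) 1)ᶜ = 0 ∧
      (∀ x : ℝ3, ∀ r : ℝ, 0 < r → μ (ball x r) ≤ ENNReal.ofReal (Cμ * r ^ α)) ∧
      ∀ p : ℝ, 0 < p → ∃ cp Cp : ℝ, 0 < cp ∧ cp ≤ Cp ∧ ∀ k : ℕ, 0 < k →
        cp * (k : ℝ) ^ ((1 : ℝ) / 4 - (α - 1) / (2 * p)) ≤
            (∫ x : ℝ3, ‖highestWeight k x‖ ^ p ∂μ) ^ (1 / p) ∧
          (∫ x : ℝ3, ‖highestWeight k x‖ ^ p ∂μ) ^ (1 / p) ≤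
            Cp * (k : ℝ) ^ ((1 : ℝ) / 4 - (α - 1) / (2 * p)) := by
  have hb : 1 ≤ (α - 1)⁻¹ := (one_le_inv₀ (by linarith)).2 (by linarith)
  refine ⟨equatorialMeasure (α - 1)⁻¹, 2 ^ α, isFiniteMeasure_equatorialMeasure _, by positivity,
    ae_equatorialMeasure_mem_sphere hb, fun x r hr ↦ ?_, fun p hp ↦ ?_⟩
  · simpa only [inv_inv, add_sub_cancel, Real.mul_rpow zero_le_two hr.le] using
      equatorialMeasure_ball_le hb x hr.le
  obtain ⟨c, C, hc, hcC, bounds⟩ :=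
    exists_integral_norm_highestWeight_rpow_equatorialMeasure_bounds hb hp
  refine ⟨c ^ (1 / p), C ^ (1 / p), by positivity, by gcongr, fun k hk ↦ ?_⟩
  have root_eq {A : ℝ} (hA : 0 ≤ A) :
      A ^ (1 / p) * (k : ℝ) ^ ((1 : ℝ) / 4 - (α - 1) / (2 * p)) =
        (A * (k : ℝ) ^ (p / 4 - (α - 1)⁻¹⁻¹ / 2)) ^ (1 / p) := by
    rw [Real.mul_rpow hA (by positivity), ← Real.rpow_mul k.cast_nonneg, inv_inv]
    congr 2
    field_simp
  rw [root_eq hc.le, root_eq (hc.le.trans hcC)]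
  obtain ⟨lower, upper⟩ := bounds k hk
  exact ⟨by gcongr, by gcongr⟩

/-- Proposition 6.1 of the paper: for each `α ∈ (1,2)` there exist an
`α`-dimensional measure `μ` on `S²` and a subsequence `(k_n)` such that
`‖H_{k_n}‖_{L^p(dμ)} ≍ k_n^{1/4 - (α-1)/(2p)}` for all `p ≥ 2`. -/
theorem sharpness_fractal_measure :
    ∀ α : ℝ, 1 < α → α < 2 →
    ∃ (μ : Measure ℝ3) (Cμ : ℝ), IsFiniteMeasure μ ∧ 0 < Cμ ∧
      μ (Metric.sphere (0 : ℝ3) 1)ᶜ = 0 ∧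
      (∀ x : ℝ3, ∀ r : ℝ, 0 < r → μ (Metric.ball x r) ≤ ENNReal.ofReal (Cμ * r ^ α)) ∧
      ∃ kn : ℕ → ℕ, StrictMono kn ∧ (∀ n, 0 < kn n) ∧
        ∀ p : ℝ, 2 ≤ p →
          ∃ cp Cp : ℝ, 0 < cp ∧ cp ≤ Cp ∧
            ∀ n : ℕ,
              cp * (kn n : ℝ) ^ ((1 : ℝ) / 4 - (α - 1) / (2 * p)) ≤
                  (∫ x : ℝ3, ‖highestWeight (kn n) x‖ ^ p ∂μ) ^ (1 / p) ∧
                (∫ x : ℝ3, ‖highestWeight (kn n) x‖ ^ p ∂μ) ^ (1 / p) ≤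
                  Cp * (kn n : ℝ) ^ ((1 : ℝ) / 4 - (α - 1) / (2 * p)) := by
  intro α hα₁ hα₂
  obtain ⟨μ, Cμ, finite, hCμ, supported, ball_le, bounds⟩ :=
    sharpness_fractal_measure_general hα₁ hα₂.le
  refine ⟨μ, Cμ, finite, hCμ, supported, ball_le, Nat.succ, Order.succ_strictMono, Nat.succ_pos,
    fun p hp ↦ ?_⟩
  obtain ⟨cp, Cp, hcp, hcC, hk⟩ := bounds p (two_pos.trans_le hp)
  exact ⟨cp, Cp, hcp, hcC, fun n ↦ hk _ n.succ_pos⟩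
end
end
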